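/- Let T be a finite tree rooted at r, let p ≥ 2·h(T), and let k ≥ 1. There exists an optimal solution of the Min-Time problem with k robots, i.e. a feasible covering 𝓘 together with a partition of 𝓘 into k parts S_1,…,S_k minimizing max_{1≤i≤k} Σ_{I∈S_i} C(I), such that every leaf of T belongs to the vertex set of exactly one immersion of 𝓘. -/

import Mathlib

/-!
Among the optimal solutions, choose one whose total cost `∑ I ∈ 𝓘, C(I)` is least. If a leaf `l` lay
in two of its immersions `I ≠ J`, replace `I` by `I - l`. This is an immersion, because no path
between other vertices passes through `l`; it is strictly cheaper than `I`; and `l` stays covered by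
`J`. As coverings are sets, `I - l` may already occur in the covering, and then `I` is simply
dropped; otherwise `I - l` goes to the robot in charge of `I`. Either way no robot works longer and
the total cost drops, a contradiction.
-/

open SimpleGraph Finset

/-- Cost of a subgraph-immersion: twice the number of its edges. -/
noncomputable def immCost {V : Type*} {G : SimpleGraph V} (I : G.Subgraph) : ℕ :=
  2 * I.edgeSet.ncard

/-- An immersion is a connected subgraph of `G` containing the root `r`. -/
def IsImmersion {V : Type*} {G : SimpleGraph V} (r : V) (I : G.Subgraph) : Prop :=
  I.Connected ∧ r ∈ I.verts

/-- Height of the rooted tree: maximum distance from the root. -/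
noncomputable def treeHeight {V : Type*} [Fintype V] (G : SimpleGraph V) (r : V) : ℕ :=
  Finset.univ.sup (fun v => G.dist r v)

/-- A leaf of the rooted tree: a vertex `v ≠ r` of degree 1. -/
def IsTreeLeaf {V : Type*} (G : SimpleGraph V) (r v : V) : Prop :=
  v ≠ r ∧ (G.neighborSet v).ncard = 1

/-- A leaf of an immersion `I`: a vertex `v ≠ r` of degree 1 in `I`. -/
def IsImmLeaf {V : Type*} {G : SimpleGraph V} (r : V) (I : G.Subgraph) (v : V) : Prop :=
  v ≠ r ∧ (I.neighborSet v).ncard = 1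

/-- A feasible covering: a finite set of immersions, each of cost at most `p`,
whose vertex sets cover all vertices. -/
def IsFeasible {V : Type*} [Fintype V] {G : SimpleGraph V} (r : V) (p : ℕ)
    (𝓘 : Finset G.Subgraph) : Prop :=
  (∀ I ∈ 𝓘, IsImmersion r I ∧ immCost I ≤ p) ∧ (∀ v : V, ∃ I ∈ 𝓘, v ∈ I.verts)

/-- Total cost of a set of immersions. -/
noncomputable def totalCost {V : Type*} {G : SimpleGraph V} (𝓘 : Finset G.Subgraph) : ℕ :=
  ∑ I ∈ 𝓘, immCost I

/-- Optimality for the Min-Distance problem. -/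
def MinDistOptimal {V : Type*} [Fintype V] {G : SimpleGraph V} (r : V) (p : ℕ)
    (𝓘 : Finset G.Subgraph) : Prop :=
  IsFeasible r p 𝓘 ∧ ∀ 𝓙 : Finset G.Subgraph, IsFeasible r p 𝓙 → totalCost 𝓘 ≤ totalCost 𝓙

/-- Makespan (maximum collective time) of an assignment `a` of immersions to `k` robots. -/
noncomputable def makespan {V : Type*} {G : SimpleGraph V} (k : ℕ)
    (𝓘 : Finset G.Subgraph) (a : G.Subgraph → Fin k) : ℕ :=
  Finset.univ.sup (fun i : Fin k => ∑ I ∈ 𝓘.filter (fun I => a I = i), immCost I)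

/-- Optimality for the Min-Time problem with `k` robots. -/
def MinTimeOptimal {V : Type*} [Fintype V] {G : SimpleGraph V} (r : V) (p k : ℕ)
    (𝓘 : Finset G.Subgraph) (a : G.Subgraph → Fin k) : Prop :=
  IsFeasible r p 𝓘 ∧ ∀ (𝓙 : Finset G.Subgraph) (b : G.Subgraph → Fin k),
    IsFeasible r p 𝓙 → makespan k 𝓘 a ≤ makespan k 𝓙 b

/-- Optimality for the Min-Immersions problem. -/
def MinImmOptimal {V : Type*} [Fintype V] {G : SimpleGraph V} (r : V) (p : ℕ)
    (𝓘 : Finset G.Subgraph) : Prop :=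
  IsFeasible r p 𝓘 ∧ ∀ 𝓙 : Finset G.Subgraph, IsFeasible r p 𝓙 → 𝓘.card ≤ 𝓙.card

section Deletion

variable {V : Type*} {G : SimpleGraph V} {r : V}

theorem connected_deleteVerts_of_subsingleton_neighborSet {H : G.Subgraph} (hH : H.Connected)
    {s : Set V} (hs : ∀ v ∈ s, (H.neighborSet v).Subsingleton) (hne : (H.verts \ s).Nonempty) :
    (H.deleteVerts s).Connected := by
  have hinduce : (H.coe.induce {v : H.verts | ↑v ∉ s}).Preconnected :=
    hH.preconnected.coe.induce_of_degree_eq_one fun v hv x hx y hy =>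
      Subtype.ext (hs v (not_not.mp hv) hx hy)
  let φ : H.coe.induce {v : H.verts | ↑v ∉ s} →g (H.deleteVerts s).coe :=
    { toFun := fun v => ⟨v.1.1, v.1.2, v.2⟩
      map_rel' := fun {u v} huv => Subgraph.deleteVerts_adj.mpr ⟨u.1.2, u.2, v.1.2, v.2, huv⟩ }
  have hφ : Function.Surjective φ := fun v => ⟨⟨⟨v.1, v.2.1⟩, v.2.2⟩, rfl⟩
  exact Subgraph.connected_iff.mpr ⟨⟨hinduce.map φ hφ⟩, hne⟩

theorem IsTreeLeaf.subsingleton_neighborSet {l : V} (hl : IsTreeLeaf G r l) (H : G.Subgraph) :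
    (H.neighborSet l).Subsingleton := by
  obtain ⟨u, hu⟩ := Set.ncard_eq_one.mp hl.2
  exact Set.subsingleton_singleton.anti (hu ▸ H.neighborSet_subset l)

theorem IsImmersion.deleteVerts_leaves {I : G.Subgraph} (hI : IsImmersion r I) {s : Set V}
    (hs : ∀ v ∈ s, IsTreeLeaf G r v) : IsImmersion r (I.deleteVerts s) := by
  have hr : r ∈ (I.deleteVerts s).verts := ⟨hI.2, fun hrs => (hs r hrs).1 rfl⟩
  exact ⟨connected_deleteVerts_of_subsingleton_neighborSet hI.1
    (fun v hv => (hs v hv).subsingleton_neighborSet I) ⟨r, hr⟩, hr⟩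

theorem IsImmersion.immCost_deleteVerts_lt {I : G.Subgraph} (hI : IsImmersion r I)
    (hfin : I.edgeSet.Finite) {v : V} (hvI : v ∈ I.verts) (hvr : v ≠ r) :
    immCost (I.deleteVerts {v}) < immCost I := by
  have : Nontrivial I.verts := ⟨⟨v, hvI⟩, ⟨r, hI.2⟩, fun h => hvr (congrArg Subtype.val h)⟩
  obtain ⟨u, hvu⟩ := hI.1.preconnected.exists_adj_of_nontrivial ⟨v, hvI⟩
  have hdel : s(v, u) ∉ (I.deleteVerts {v}).edgeSet := fun h =>
    (Subgraph.deleteVerts_adj.mp h).2.1 rfl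
  have hssub : (I.deleteVerts {v}).edgeSet ⊂ I.edgeSet :=
    (Subgraph.edgeSet_mono Subgraph.deleteVerts_le).ssubset_of_mem_notMem hvu hdel
  exact Nat.mul_lt_mul_of_pos_left (Set.ncard_lt_ncard hssub hfin) two_pos

end Deletion

section RootPaths

variable {V : Type*} {G : SimpleGraph V}

theorem immCost_toSubgraph_le {u v : V} (w : G.Walk u v) :
    immCost w.toSubgraph ≤ 2 * w.length := by
  classical
  have hedges : w.toSubgraph.edgeSet = w.edges.toFinset := by
    rw [w.edgeSet_toSubgraph, w.coe_edges_toFinset]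
  rw [immCost, hedges, Set.ncard_coe_finset, ← w.length_edges]
  exact Nat.mul_le_mul_left 2 w.edges.toFinset_card_le

theorem isImmersion_toSubgraph {r v : V} (w : G.Walk r v) : IsImmersion r w.toSubgraph :=
  ⟨w.toSubgraph_connected, w.start_mem_verts_toSubgraph⟩

theorem dist_le_treeHeight [Fintype V] (r v : V) : G.dist r v ≤ treeHeight G r :=
  Finset.le_sup (f := G.dist r) (Finset.mem_univ v)

theorem exists_isFeasible [Fintype V] {r : V} {p : ℕ} (hG : G.Connected)
    (hp : 2 * treeHeight G r ≤ p) : ∃ 𝓘 : Finset G.Subgraph, IsFeasible r p 𝓘 := by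
  classical
  choose w hw using fun v => hG.exists_walk_length_eq_dist r v
  have hcost (v : V) : immCost (w v).toSubgraph ≤ p := calc
    immCost (w v).toSubgraph ≤ 2 * (w v).length := immCost_toSubgraph_le (w v)
    _ = 2 * G.dist r v := by rw [hw]
    _ ≤ 2 * treeHeight G r := Nat.mul_le_mul_left 2 (dist_le_treeHeight r v)
    _ ≤ p := hp
  refine ⟨Finset.univ.image fun v => (w v).toSubgraph, ?_, fun v => ?_⟩
  · exact Finset.forall_mem_image.mpr fun v _ => ⟨isImmersion_toSubgraph (w v), hcost v⟩
  · exact ⟨_, Finset.mem_image_of_mem _ (Finset.mem_univ v), (w v).end_mem_verts_toSubgraph⟩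

end RootPaths

section Exchange

variable {V : Type*} {G : SimpleGraph V} {k : ℕ} {𝓘 𝓙 : Finset G.Subgraph} {I D : G.Subgraph}

theorem IsFeasible.insert_erase [Fintype V] [DecidableEq G.Subgraph] {r : V} {p : ℕ}
    (h𝓘 : IsFeasible r p 𝓘) (hD : IsImmersion r D) (hDp : immCost D ≤ p)
    (hcover : ∀ v ∈ I.verts, v ∈ D.verts ∨ ∃ J ∈ 𝓘.erase I, v ∈ J.verts) :
    IsFeasible r p (insert D (𝓘.erase I)) := by
  refine ⟨(Finset.forall_mem_insert _ _ _).mpr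
    ⟨⟨hD, hDp⟩, fun K hK => h𝓘.1 K (Finset.mem_of_mem_erase hK)⟩, fun v => ?_⟩
  rw [Finset.exists_mem_insert]
  obtain ⟨K, hK, hvK⟩ := h𝓘.2 v
  rcases eq_or_ne K I with rfl | hKI
  · exact hcover v hvK
  · exact Or.inr ⟨K, Finset.mem_erase.mpr ⟨hKI, hK⟩, hvK⟩

theorem makespan_mono (h : 𝓘 ⊆ 𝓙) (a : G.Subgraph → Fin k) : makespan k 𝓘 a ≤ makespan k 𝓙 a :=
  Finset.sup_mono_fun fun _ _ => Finset.sum_le_sum_of_subset (Finset.filter_subset_filter _ h)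

theorem makespan_insert_update_le [DecidableEq G.Subgraph] (hI : I ∉ 𝓙) (hD : D ∉ 𝓙)
    (hDI : immCost D ≤ immCost I) (a : G.Subgraph → Fin k) :
    makespan k (insert D 𝓙) (Function.update a D (a I)) ≤ makespan k (insert I 𝓙) a := by
  refine Finset.sup_mono_fun fun i _ => ?_
  have hcongr (K) (hK : K ∈ 𝓙) : Function.update a D (a I) K = a K :=
    Function.update_of_ne (ne_of_mem_of_not_mem hK hD) _ _
  simp only [Finset.sum_filter, Finset.sum_insert hI, Finset.sum_insert hD, Function.update_self]
  refine add_le_add ?_ (Finset.sum_congr rfl fun K hK => by rw [hcongr K hK]).le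
  split_ifs
  · exact hDI
  · exact le_rfl

theorem exists_makespan_insert_erase_le [DecidableEq G.Subgraph] (hI : I ∈ 𝓘)
    (hDI : immCost D ≤ immCost I) (a : G.Subgraph → Fin k) :
    ∃ b : G.Subgraph → Fin k, makespan k (insert D (𝓘.erase I)) b ≤ makespan k 𝓘 a := by
  by_cases hD : D ∈ 𝓘.erase I
  · rw [Finset.insert_eq_of_mem hD]
    exact ⟨a, makespan_mono (Finset.erase_subset I 𝓘) a⟩
  · refine ⟨Function.update a D (a I), ?_⟩
    simpa only [Finset.insert_erase hI] using
      makespan_insert_update_le (Finset.notMem_erase I 𝓘) hD hDI a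

theorem totalCost_insert_le [DecidableEq G.Subgraph] (D : G.Subgraph) (𝓙 : Finset G.Subgraph) :
    totalCost (insert D 𝓙) ≤ immCost D + totalCost 𝓙 := by
  by_cases hD : D ∈ 𝓙
  · rw [Finset.insert_eq_of_mem hD]
    exact Nat.le_add_left _ _
  · exact (Finset.sum_insert hD).le

theorem totalCost_insert_erase_lt [DecidableEq G.Subgraph] (hI : I ∈ 𝓘)
    (hDI : immCost D < immCost I) : totalCost (insert D (𝓘.erase I)) < totalCost 𝓘 := calc
  totalCost (insert D (𝓘.erase I)) ≤ immCost D + totalCost (𝓘.erase I) :=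
    totalCost_insert_le _ _
  _ < immCost I + totalCost (𝓘.erase I) := Nat.add_lt_add_right hDI _
  _ = totalCost 𝓘 := Finset.add_sum_erase 𝓘 immCost hI

end Exchange

section Optimality

variable {V : Type*} [Fintype V] {G : SimpleGraph V} {r : V} {p k : ℕ} {𝓘 𝓙 : Finset G.Subgraph}
  {a b : G.Subgraph → Fin k}

theorem exists_minTimeOptimal (hk : 0 < k) (h𝓘 : IsFeasible r p 𝓘) :
    ∃ (𝓙 : Finset G.Subgraph) (b : G.Subgraph → Fin k), MinTimeOptimal r p k 𝓙 b := by
  obtain ⟨⟨𝓙, b⟩, h𝓙, hmin⟩ := exists_minimalFor_of_wellFoundedLT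
    (fun x : Finset G.Subgraph × (G.Subgraph → Fin k) => IsFeasible r p x.1)
    (fun x => makespan k x.1 x.2) ⟨(𝓘, fun _ => ⟨0, hk⟩), h𝓘⟩
  exact ⟨𝓙, b, h𝓙, fun 𝓚 c h𝓚 => le_of_not_gt fun hlt =>
    hlt.not_ge (hmin (j := (𝓚, c)) h𝓚 hlt.le)⟩

theorem MinTimeOptimal.of_makespan_le (h : MinTimeOptimal r p k 𝓘 a) (h𝓙 : IsFeasible r p 𝓙)
    (hle : makespan k 𝓙 b ≤ makespan k 𝓘 a) : MinTimeOptimal r p k 𝓙 b :=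
  ⟨h𝓙, fun 𝓚 c h𝓚 => hle.trans (h.2 𝓚 c h𝓚)⟩

theorem MinTimeOptimal.exists_totalCost_lt (h : MinTimeOptimal r p k 𝓘 a) {l : V}
    (hl : IsTreeLeaf G r l) {I J : G.Subgraph} (hI : I ∈ 𝓘) (hJ : J ∈ 𝓘) (hJI : J ≠ I)
    (hlI : l ∈ I.verts) (hlJ : l ∈ J.verts) :
    ∃ (𝓙 : Finset G.Subgraph) (b : G.Subgraph → Fin k),
      MinTimeOptimal r p k 𝓙 b ∧ totalCost 𝓙 < totalCost 𝓘 := by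
  classical
  obtain ⟨hImm, hIp⟩ := h.1.1 I hI
  have hDimm : IsImmersion r (I.deleteVerts {l}) :=
    hImm.deleteVerts_leaves fun v hv => hv ▸ hl
  have hDI : immCost (I.deleteVerts {l}) < immCost I :=
    hImm.immCost_deleteVerts_lt (Set.toFinite _) hlI hl.1
  have hfeas : IsFeasible r p (insert (I.deleteVerts {l}) (𝓘.erase I)) := by
    refine h.1.insert_erase hDimm (hDI.le.trans hIp) fun v hv => ?_
    rcases eq_or_ne v l with rfl | hvl
    · exact Or.inr ⟨J, Finset.mem_erase.mpr ⟨hJI, hJ⟩, hlJ⟩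
    · exact Or.inl ⟨hv, hvl⟩
  obtain ⟨b, hb⟩ := exists_makespan_insert_erase_le hI hDI.le a
  exact ⟨_, b, h.of_makespan_le hfeas hb, totalCost_insert_erase_lt hI hDI⟩

end Optimality

theorem stmt_4_general {V : Type*} [Fintype V] (G : SimpleGraph V) (r : V) (p k : ℕ)
    (hG : G.Connected) (hp : 2 * treeHeight G r ≤ p) (hk : 1 ≤ k) :
    ∃ (𝓘 : Finset G.Subgraph) (a : G.Subgraph → Fin k),
      MinTimeOptimal r p k 𝓘 a ∧
      ∀ l : V, IsTreeLeaf G r l → ∃! I : G.Subgraph, I ∈ 𝓘 ∧ l ∈ I.verts := by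
  obtain ⟨𝓘₀, h𝓘₀⟩ := exists_isFeasible hG hp
  obtain ⟨𝓘₁, a₁, hopt₁⟩ := exists_minTimeOptimal hk h𝓘₀
  obtain ⟨⟨𝓘, a⟩, hopt, hmin⟩ := exists_minimalFor_of_wellFoundedLT
    (fun x : Finset G.Subgraph × (G.Subgraph → Fin k) => MinTimeOptimal r p k x.1 x.2)
    (fun x => totalCost x.1) ⟨(𝓘₁, a₁), hopt₁⟩
  refine ⟨𝓘, a, hopt, fun l hl => ?_⟩
  obtain ⟨I, hI, hlI⟩ := hopt.1.2 l
  refine ⟨I, ⟨hI, hlI⟩, fun J ⟨hJ, hlJ⟩ => ?_⟩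
  by_contra hJI
  obtain ⟨𝓙, b, hopt', hlt⟩ := hopt.exists_totalCost_lt hl hI hJ hJI hlI hlJ
  exact hlt.not_ge (hmin (j := (𝓙, b)) hopt' hlt.le)

theorem stmt_4 {V : Type*} [Fintype V] (T : SimpleGraph V) (r : V) (p k : ℕ)
    (hT : T.IsTree) (hp : 2 * treeHeight T r ≤ p) (hk : 1 ≤ k) :
    ∃ (𝓘 : Finset T.Subgraph) (a : T.Subgraph → Fin k),
      MinTimeOptimal r p k 𝓘 a ∧
      ∀ l : V, IsTreeLeaf T r l → ∃! I : T.Subgraph, I ∈ 𝓘 ∧ l ∈ I.verts :=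
  stmt_4_general T r p k hT.connected hp hk
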